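/- (Double inverse transgression lemma.) Let p be an odd prime, n = 3, and for a = (a_1,a_2,a_3) ∈ (ℤ/p)^3 let T_a := a_1 • (x_2 • y_3 − x_3 • y_2) + a_2 • (x_3 • y_1 − x_1 • y_3) + a_3 • (x_1 • y_2 − x_2 • y_1) ∈ Λ be the inverse transgression of P = x_1•y_2y_3 − x_2•y_1y_3 + x_3•y_1y_2 at a. Then for all a, b ∈ (ℤ/p)^3, φ_b(T_a) = T_a + c · z where c := (a_3 b_2 − a_2 b_3)·x_1 + (a_1 b_3 − a_3 b_1)·x_2 + (a_2 b_1 − a_1 b_2)·x_3 ∈ R; that is, the double inverse transgression τ_b(τ_a(P)) equals the dot product of the cross product b × a of the vectors b and a with (x_1, x_2, x_3). -/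

import Mathlib

/-!
Algebraic model of the inverse transgression map for `G = (ℤ/p)^n`.

`R p n = 𝔽_p[x_1, …, x_n]`, `Λ p n` is the exterior algebra over `R p n` on the free
module `Fin (n+1) → R p n` with standard basis `e_0, …, e_n`; `y p n i = ι e_i`
(modelling `y_{i+1}`) and `z p n = ι e_n`.  `φ p n a` is the algebra map induced by
`e_i ↦ e_i + a_{i+1} e_n` (for `i < n`) and `e_n ↦ 0`.
-/

noncomputable section

open ExteriorAlgebra

abbrev R (p n : ℕ) : Type := MvPolynomial (Fin n) (ZMod p)

abbrev Λ (p n : ℕ) : Type := ExteriorAlgebra (R p n) (Fin (n + 1) → R p n)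

/-- The class `y_{i+1}`, i.e. `ι e_i` for `i = 0, …, n-1`. -/
def y (p n : ℕ) (i : Fin n) : Λ p n :=
  ExteriorAlgebra.ι (R p n) (Pi.single i.castSucc 1)

/-- The extra exterior generator `z = ι e_n`. -/
def z (p n : ℕ) : Λ p n :=
  ExteriorAlgebra.ι (R p n) (Pi.single (Fin.last n) 1)

/-- The linear endomorphism `e_i ↦ e_i + a_{i+1} • e_n` (`i < n`), `e_n ↦ 0`. -/
def f (p n : ℕ) (a : Fin n → ZMod p) :
    (Fin (n + 1) → R p n) →ₗ[R p n] (Fin (n + 1) → R p n) :=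
  ∑ i : Fin n,
    LinearMap.smulRight (LinearMap.proj i.castSucc)
      ((Pi.single i.castSucc 1 : Fin (n + 1) → R p n) +
        algebraMap (ZMod p) (R p n) (a i) • (Pi.single (Fin.last n) 1 : Fin (n + 1) → R p n))

/-- The algebraic inverse-transgression substitution `φ_a`. -/
def φ (p n : ℕ) (a : Fin n → ZMod p) : Λ p n →ₐ[R p n] Λ p n :=
  ExteriorAlgebra.map (f p n a)

/-- The degree-4 class `P = x_1 y_2 y_3 - x_2 y_1 y_3 + x_3 y_1 y_2` for `n = 3`. -/
def P (p : ℕ) : Λ p 3 :=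
  (MvPolynomial.X 0 : R p 3) • (y p 3 1 * y p 3 2)
    - (MvPolynomial.X 1 : R p 3) • (y p 3 0 * y p 3 2)
    + (MvPolynomial.X 2 : R p 3) • (y p 3 0 * y p 3 1)

/-- The inverse transgression
`T_a = a_1 (x_2 y_3 - x_3 y_2) + a_2 (x_3 y_1 - x_1 y_3) + a_3 (x_1 y_2 - x_2 y_1)`
of `P` at `a`. -/
def T (p : ℕ) (a : Fin 3 → ZMod p) : Λ p 3 :=
  algebraMap (ZMod p) (R p 3) (a 0) •
      ((MvPolynomial.X 1 : R p 3) • y p 3 2 - (MvPolynomial.X 2 : R p 3) • y p 3 1)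
    + algebraMap (ZMod p) (R p 3) (a 1) •
      ((MvPolynomial.X 2 : R p 3) • y p 3 0 - (MvPolynomial.X 0 : R p 3) • y p 3 2)
    + algebraMap (ZMod p) (R p 3) (a 2) •
      ((MvPolynomial.X 0 : R p 3) • y p 3 1 - (MvPolynomial.X 1 : R p 3) • y p 3 0)

/-- The polynomial `(b × a) · (x_1, x_2, x_3)`, the double inverse transgression
`τ_b τ_a (P)`. -/
def crossDot (p : ℕ) (a b : Fin 3 → ZMod p) : R p 3 :=
  MvPolynomial.C (a 2 * b 1 - a 1 * b 2) * MvPolynomial.X 0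
    + MvPolynomial.C (a 0 * b 2 - a 2 * b 0) * MvPolynomial.X 1
    + MvPolynomial.C (a 1 * b 0 - a 0 * b 1) * MvPolynomial.X 2

/-- The vector `(a_1, …, a_n)` of scalars of `ZMod p`, viewed in `R p n`, so that it can be
multiplied with the vector of variables. -/
def constVec (p n : ℕ) (a : Fin n → ZMod p) : Fin n → R p n :=
  fun i => MvPolynomial.C (a i)

section InverseTransgression

open Matrix

variable {p n : ℕ}

theorem f_single_castSucc (a : Fin n → ZMod p) (i : Fin n) :
    f p n a (Pi.single i.castSucc 1) =
      Pi.single i.castSucc 1 + constVec p n a i • Pi.single (Fin.last n) 1 := by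
  simp [f, constVec, Pi.single_apply, Fin.castSucc_inj, Finset.sum_add_distrib,
    MvPolynomial.algebraMap_eq]

theorem φ_y (a : Fin n → ZMod p) (i : Fin n) :
    φ p n a (y p n i) = y p n i + constVec p n a i • z p n := by
  rw [φ, y, z, ExteriorAlgebra.map_apply_ι, f_single_castSucc, map_add, map_smul]

theorem φ_sum_smul_y (a : Fin n → ZMod p) (v : Fin n → R p n) :
    φ p n a (∑ i, v i • y p n i) = ∑ i, v i • y p n i + (constVec p n a ⬝ᵥ v) • z p n := by
  rw [dotProduct_comm]
  simp only [map_sum, map_smul, φ_y, smul_add, Finset.sum_add_distrib, smul_smul,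
    ← Finset.sum_smul, dotProduct]

theorem T_eq_sum_crossProduct_smul_y (a : Fin 3 → ZMod p) :
    T p a = ∑ i, (constVec p 3 a ⨯₃ MvPolynomial.X) i • y p 3 i := by
  simp only [T, constVec, cross_apply, Fin.sum_univ_three, MvPolynomial.algebraMap_eq,
    cons_val_zero, cons_val_one, cons_val]
  module

theorem crossDot_eq_dotProduct_crossProduct (a b : Fin 3 → ZMod p) :
    crossDot p a b = MvPolynomial.X ⬝ᵥ constVec p 3 b ⨯₃ constVec p 3 a := by
  simp only [crossDot, constVec, cross_apply, vec3_dotProduct, map_sub, map_mul,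
    cons_val_zero, cons_val_one, cons_val]
  ring

-- `T p a` is the linear form with coefficient vector `a × x`, so the coefficient of `z` is the
-- scalar triple product `b · (a × x)`, whose cyclic symmetry turns it into `x · (b × a)`.
theorem statement2_general (a b : Fin 3 → ZMod p) :
    φ p 3 b (T p a) = T p a + crossDot p a b • z p 3 := by
  rw [T_eq_sum_crossProduct_smul_y, φ_sum_smul_y, crossDot_eq_dotProduct_crossProduct,
    triple_product_permutation MvPolynomial.X]

end InverseTransgression

/-- Double inverse transgression lemma: for all `a, b ∈ (ℤ/p)^3`,
`φ_b (T_a) = T_a + c • z` where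
`c = (a_3 b_2 - a_2 b_3) x_1 + (a_1 b_3 - a_3 b_1) x_2 + (a_2 b_1 - a_1 b_2) x_3`,
i.e. `τ_b (τ_a (P)) = (b × a) · (x_1, x_2, x_3)`. -/
theorem statement2 (p : ℕ) (hp : p.Prime) (hodd : Odd p) (a b : Fin 3 → ZMod p) :
    φ p 3 b (T p a) = T p a + crossDot p a b • z p 3 := by
  exact statement2_general a b

end
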